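/- Let 0 < b < 1 and a > 0, and let γ₀(t) = (a cos t, a sin t). Define the Minkowski–Randers length of an admissible closed curve γ = (x¹, x²) by L(γ) = ∫₀^{2π} (‖γ'(t)‖ + b ẋ¹(t)) dt. Then γ₀ is a solution of the Minkowski isoperimetric problem: there exists ε > 0 such that every admissible closed curve γ : [0,2π] → ℝ² with sup_{t∈[0,2π]} ‖γ(t) − γ₀(t)‖ < ε and L(γ) = L(γ₀) = 2πa satisfies A(γ) ≤ A(γ₀) = πa². -/

import Mathlib

/-!
Closedness of `γ` kills the term `b ∫ ẋ¹`, so the constraint only says that the Euclidean length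
of `γ` is `2πa`, and the claim follows from the classical (global) isoperimetric inequality.

The isoperimetric inequality is proved by a variant of P. Lax's argument that needs no
reparametrization by arc length. Cut `γ` at the point where half of its length `2ℓ` is used up and
take as axis the line through the cut point and the starting point. If `u` is the coordinate
normal to this axis, `w` the coordinate along it, `v` the speed and `S` the arc length from the
midpoint of one of the two halves, then for every `ω < π / ℓ`, pointwise,
`-2 u ẇ ≤ v / ω + d/dt (u² tan (ω S))` (`lax_pointwise`). Since `u` vanishes at both ends of each
half, integrating gives at most `ℓ / ω` per half (`half_area_le`). Twice the area equals
`-∫ 2 u ẇ` (`exists_axis` provides the axis), hence it is at most `2 ℓ / ω`; letting `ω → π / ℓ`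
gives the inequality (`two_mul_signedArea_le`).
-/

/-- Euclidean norm of a vector of `ℝ × ℝ`. -/
noncomputable def enorm2 (v : ℝ × ℝ) : ℝ := Real.sqrt (v.1 ^ 2 + v.2 ^ 2)

/-- An admissible closed curve: continuous on `[0, 2π]`, closed, and piecewise
continuously differentiable with respect to some partition of `[0, 2π]`. -/
def IsAdmissible (γ : ℝ → ℝ × ℝ) : Prop :=
  ContinuousOn γ (Set.Icc 0 (2 * Real.pi)) ∧ γ 0 = γ (2 * Real.pi) ∧
  ∃ (k : ℕ) (p : ℕ → ℝ), 0 < k ∧ p 0 = 0 ∧ p k = 2 * Real.pi ∧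
    (∀ i < k, p i < p (i + 1)) ∧
    (∀ i < k, ContDiffOn ℝ 1 γ (Set.Icc (p i) (p (i + 1))))

/-- The signed area enclosed by a closed curve `γ = (x¹, x²)`:
`A(γ) = (1/2) ∫₀^{2π} (x¹ ẋ² − x² ẋ¹) dt`. -/
noncomputable def signedArea (γ : ℝ → ℝ × ℝ) : ℝ :=
  (1 / 2) * ∫ t in (0 : ℝ)..(2 * Real.pi),
    ((γ t).1 * (deriv γ t).2 - (γ t).2 * (deriv γ t).1)

/-- The Minkowski–Randers length `L(γ) = ∫₀^{2π} (‖γ'(t)‖ + b ẋ¹(t)) dt`. -/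
noncomputable def minkowskiLength (b : ℝ) (γ : ℝ → ℝ × ℝ) : ℝ :=
  ∫ t in (0 : ℝ)..(2 * Real.pi), (enorm2 (deriv γ t) + b * (deriv γ t).1)

open MeasureTheory Set Filter Topology

/-- The calibration inequality: the difference of the two sides is at least
`v (cos φ - ω |y|)² / (ω cos² φ)`, because `|y' sin φ - x' cos φ| ≤ v`. -/
lemma lax_pointwise (x' y' v y φ ω : ℝ) (hv0 : 0 ≤ v) (hv : v ^ 2 = x' ^ 2 + y' ^ 2)
    (hω : 0 < ω) (hφ : 0 < Real.cos φ) :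
    2 * y * x' ≤ v * (1 / ω + y ^ 2 * ω / Real.cos φ ^ 2) + y' * (2 * y * Real.tan φ) := by
  rw [Real.tan_eq_sin_div_cos]
  have hsc := Real.sin_sq_add_cos_sq φ
  set s := Real.sin φ
  set k := Real.cos φ
  have hq : |y' * s - x' * k| ≤ v := by
    apply abs_le_of_sq_le_sq _ hv0
    have : v ^ 2 = (y' * s - x' * k) ^ 2 + (y' * k + x' * s) ^ 2 := by
      rw [hv]; linear_combination (-(x' ^ 2 + y' ^ 2)) * hsc
    nlinarith [sq_nonneg (y' * k + x' * s)]
  have h1 : -(|y| * v) ≤ y * (y' * s - x' * k) := by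
    have h2 := neg_abs_le (y * (y' * s - x' * k))
    rw [abs_mul] at h2
    nlinarith [abs_nonneg y, mul_le_mul_of_nonneg_left hq (abs_nonneg y)]
  have key : 0 ≤ v * (k ^ 2 + y ^ 2 * ω ^ 2) + 2 * ω * k * (y * (y' * s - x' * k)) := by
    have h3 : 0 ≤ v * (k - ω * |y|) ^ 2 := mul_nonneg hv0 (sq_nonneg _)
    have h4 : (0 : ℝ) ≤ 2 * ω * k := by positivity
    have h5 := mul_le_mul_of_nonneg_left h1 h4
    have h6 : |y| ^ 2 = y ^ 2 := sq_abs y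
    have h7 : v * (k - ω * |y|) ^ 2 = v * (k ^ 2 + y ^ 2 * ω ^ 2) + 2 * ω * k * -(|y| * v) := by
      rw [← h6]; ring
    linarith
  have : v * (1 / ω + y ^ 2 * ω / k ^ 2) + y' * (2 * y * (s / k)) - 2 * y * x'
      = (v * (k ^ 2 + y ^ 2 * ω ^ 2) + 2 * ω * k * (y * (y' * s - x' * k))) / (ω * k ^ 2) := by
    field_simp
    ring
  have h8 : 0 ≤ v * (1 / ω + y ^ 2 * ω / k ^ 2) + y' * (2 * y * (s / k)) - 2 * y * x' := by
    rw [this]; positivity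
  linarith

/-- The area bound for an arc of length `ℓ = S q - S p < π / ω` with both endpoints on the axis
`y = 0`. -/
lemma half_area_le {p q ω : ℝ} (hpq : p ≤ q) {x' y y' S v : ℝ → ℝ} {P : Set ℝ}
    (hP : P.Countable) (hy : ContinuousOn y (Icc p q)) (hS : ContinuousOn S (Icc p q))
    (hyd : ∀ t ∈ Ioo p q \ P, HasDerivAt y (y' t) t)
    (hSd : ∀ t ∈ Ioo p q \ P, HasDerivAt S (v t) t)
    (hv0 : ∀ t, 0 ≤ v t) (hv : ∀ t, v t ^ 2 = x' t ^ 2 + y' t ^ 2)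
    (hx'i : IntervalIntegrable x' volume p q) (hy'i : IntervalIntegrable y' volume p q)
    (hvi : IntervalIntegrable v volume p q) (hyp : y p = 0) (hyq : y q = 0)
    (hSmem : ∀ t ∈ Icc p q, S t ∈ Icc (S p) (S q))
    (hω : 0 < ω) (hℓ : ω * (S q - S p) < Real.pi) :
    ∫ t in p..q, 2 * y t * x' t ≤ (S q - S p) / ω := by
  set φ : ℝ → ℝ := fun t => ω * (S t - (S p + S q) / 2) with hφdef
  have hcos : ∀ t ∈ Icc p q, 0 < Real.cos (φ t) := by
    intro t ht
    obtain ⟨h1, h2⟩ := hSmem t ht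
    apply Real.cos_pos_of_mem_Ioo
    constructor
    · have := mul_le_mul_of_nonneg_left h1 hω.le
      simp only [hφdef]; nlinarith
    · have := mul_le_mul_of_nonneg_left h2 hω.le
      simp only [hφdef]; nlinarith
  have hφc : ContinuousOn φ (Icc p q) := by
    simp only [hφdef]; fun_prop
  have hcosc : ContinuousOn (fun t => Real.cos (φ t)) (Icc p q) :=
    Real.continuous_cos.comp_continuousOn hφc
  have htanc : ContinuousOn (fun t => Real.tan (φ t)) (Icc p q) := by
    simp only [Real.tan_eq_sin_div_cos]
    exact (Real.continuous_sin.comp_continuousOn hφc).div hcosc fun t ht => (hcos t ht).ne'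
  set K : ℝ → ℝ := fun t => S t / ω + y t ^ 2 * Real.tan (φ t) with hK
  set K' : ℝ → ℝ := fun t => v t * (1 / ω + y t ^ 2 * ω / Real.cos (φ t) ^ 2)
    + y' t * (2 * y t * Real.tan (φ t)) with hK'
  have hKi : IntervalIntegrable K' volume p q := by
    refine (hvi.mul_continuousOn ?_).add (hy'i.mul_continuousOn ?_)
    · rw [uIcc_of_le hpq]
      exact continuousOn_const.add (((hy.pow 2).mul continuousOn_const).div (hcosc.pow 2)
        fun t ht => pow_ne_zero _ (hcos t ht).ne')
    · rw [uIcc_of_le hpq]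
      exact (continuousOn_const.mul hy).mul htanc
  have hint : ∫ t in p..q, K' t = K q - K p := by
    refine integral_eq_of_hasDerivAt_off_countable_of_le K K' hpq hP
      ((hS.div_const _).add ((hy.pow 2).mul htanc)) ?_ hKi
    intro t ht
    have hc := hcos t (Ioo_subset_Icc_self ht.1)
    have hφd : HasDerivAt φ (ω * v t) t := ((hSd t ht).sub_const _).const_mul ω
    have h := ((hSd t ht).div_const ω).add
      (((hyd t ht).pow 2).mul ((Real.hasDerivAt_tan hc.ne').comp t hφd))
    refine h.congr_deriv ?_
    simp only [hK', Function.comp, Pi.pow_apply]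
    field_simp
    ring
  have hle : ∫ t in p..q, 2 * y t * x' t ≤ ∫ t in p..q, K' t := by
    refine intervalIntegral.integral_mono_on hpq ?_ hKi ?_
    · refine hx'i.continuousOn_mul ?_
      rw [uIcc_of_le hpq]
      exact continuousOn_const.mul hy
    · intro t ht
      exact lax_pointwise _ _ _ _ _ _ (hv0 t) (hv t) hω (hcos t ht)
  rw [hint] at hle
  simp only [hK, hyp, hyq] at hle
  refine hle.trans (le_of_eq ?_)
  ring

/-- Some unit vector `(c, s)` is parallel to `(d, e)`. -/
lemma exists_axis (d e : ℝ) : ∃ c s : ℝ, c ^ 2 + s ^ 2 = 1 ∧ -s * d + c * e = 0 := by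
  by_cases h : d ^ 2 + e ^ 2 = 0
  · have hd : d = 0 := by nlinarith [sq_nonneg d, sq_nonneg e]
    have he : e = 0 := by nlinarith [sq_nonneg d, sq_nonneg e]
    exact ⟨1, 0, by norm_num, by simp [he]⟩
  · have hpos : 0 < d ^ 2 + e ^ 2 := lt_of_le_of_ne (by positivity) (Ne.symm h)
    have hr := Real.sqrt_pos.2 hpos
    have hsq := Real.sq_sqrt hpos.le
    set r := Real.sqrt (d ^ 2 + e ^ 2)
    refine ⟨d / r, e / r, ?_, by ring⟩
    rw [div_pow, div_pow, ← add_div, hsq, div_self h]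

/-- A point of `(p 0, p n)` off the partition lies in the interior of one of the cells. -/
lemma exists_cell {p : ℕ → ℝ} {t : ℝ} (ht : t ∉ range p) (h0 : p 0 < t) :
    ∀ n, t < p n → ∃ i < n, t ∈ Ioo (p i) (p (i + 1)) := by
  intro n
  induction n with
  | zero => intro h; exact absurd h h0.not_gt
  | succ n ih =>
    intro h
    rcases lt_trichotomy t (p n) with h1 | h1 | h1
    · obtain ⟨i, hi, hti⟩ := ih h1
      exact ⟨i, by omega, hti⟩
    · exact absurd ⟨n, h1.symm⟩ ht
    · exact ⟨n, by omega, h1, h⟩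

/-- Regularity of an admissible curve: off a countable set it is differentiable with derivative
continuous at the point, and the derivative is integrable. -/
lemma IsAdmissible.regular {γ : ℝ → ℝ × ℝ} (h : IsAdmissible γ) :
    ∃ P : Set ℝ, P.Countable ∧
      (∀ t ∈ Ioo 0 (2 * Real.pi) \ P,
        HasDerivAt γ (deriv γ t) t ∧ ContinuousAt (deriv γ) t) ∧
      IntervalIntegrable (deriv γ) volume 0 (2 * Real.pi) := by
  obtain ⟨-, -, k, p, -, hp0, hpk, hlt, hC⟩ := h
  have hnhds : ∀ i, ∀ t ∈ Ioo (p i) (p (i + 1)), Icc (p i) (p (i + 1)) ∈ 𝓝 t :=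
    fun i t ht => Icc_mem_nhds ht.1 ht.2
  have hcont : ∀ i < k, ContinuousOn (derivWithin γ (Icc (p i) (p (i + 1))))
      (Icc (p i) (p (i + 1))) := fun i hi =>
    (hC i hi).continuousOn_derivWithin (uniqueDiffOn_Icc (hlt i hi)) le_rfl
  refine ⟨range p, countable_range p, ?_, ?_⟩
  · rintro t ⟨ht, htP⟩
    obtain ⟨i, hi, hti⟩ := exists_cell htP (hp0 ▸ ht.1) k (hpk ▸ ht.2)
    refine ⟨?_, ?_⟩
    · exact (((hC i hi).differentiableOn one_ne_zero).differentiableAt (hnhds i t hti)).hasDerivAt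
    · refine ((hcont i hi).continuousAt (hnhds i t hti)).congr ?_
      filter_upwards [Ioo_mem_nhds hti.1 hti.2] with s hs
      exact derivWithin_of_mem_nhds (hnhds i s hs)
  · rw [← hp0, ← hpk]
    refine IntervalIntegrable.trans_iterate fun i hi => ?_
    have h1 : IntervalIntegrable (derivWithin γ (Icc (p i) (p (i + 1)))) volume
        (p i) (p (i + 1)) :=
      ContinuousOn.intervalIntegrable (by rw [uIcc_of_le (hlt i hi).le]; exact hcont i hi)
    refine h1.congr_uIoo ?_
    rw [uIoo_of_le (hlt i hi).le]
    exact fun s hs => derivWithin_of_mem_nhds (hnhds i s hs)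

lemma continuous_enorm2 : Continuous enorm2 := by
  unfold enorm2; fun_prop

lemma enorm2_nonneg (w : ℝ × ℝ) : 0 ≤ enorm2 w := Real.sqrt_nonneg _

lemma enorm2_sq (w : ℝ × ℝ) : enorm2 w ^ 2 = w.1 ^ 2 + w.2 ^ 2 :=
  Real.sq_sqrt (by positivity)

lemma intervalIntegrable_comps {f : ℝ → ℝ × ℝ} {p q : ℝ}
    (h : IntervalIntegrable f volume p q) :
    IntervalIntegrable (fun t => (f t).1) volume p q ∧
    IntervalIntegrable (fun t => (f t).2) volume p q := by
  rw [intervalIntegrable_iff] at h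
  exact ⟨intervalIntegrable_iff.2 h.fst, intervalIntegrable_iff.2 h.snd⟩

lemma intervalIntegrable_enorm2 {f : ℝ → ℝ × ℝ} {p q : ℝ}
    (h : IntervalIntegrable f volume p q) :
    IntervalIntegrable (fun t => enorm2 (f t)) volume p q := by
  obtain ⟨h1, h2⟩ := intervalIntegrable_comps h
  refine (h1.abs.add h2.abs).mono_fun'
    (continuous_enorm2.comp_aestronglyMeasurable h.def'.aestronglyMeasurable) ?_
  refine Eventually.of_forall fun t => ?_
  simp only [Real.norm_eq_abs, abs_of_nonneg (enorm2_nonneg _)]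
  apply abs_le_of_sq_le_sq' _ (by positivity) |>.2
  rw [enorm2_sq, add_sq, sq_abs, sq_abs]
  have : 0 ≤ 2 * |(f t).1| * |(f t).2| := by positivity
  linarith

/-- The isoperimetric inequality `2 A ≤ L c` for every `c > L / (2π)`, with `L` the Euclidean
length. -/
lemma two_mul_signedArea_le {γ : ℝ → ℝ × ℝ} (h : IsAdmissible γ) {c : ℝ} (hc : 0 < c)
    (hL : (∫ t in (0 : ℝ)..(2 * Real.pi), enorm2 (deriv γ t)) < 2 * Real.pi * c) :
    2 * signedArea γ ≤ (∫ t in (0 : ℝ)..(2 * Real.pi), enorm2 (deriv γ t)) * c := by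
  obtain ⟨P, hP, hd, hi⟩ := h.regular
  obtain ⟨hγc, hcl, -⟩ := h
  have hpi : (0 : ℝ) ≤ 2 * Real.pi := by positivity
  set v : ℝ → ℝ := fun t => enorm2 (deriv γ t) with hvdef
  have hvi : IntervalIntegrable v volume 0 (2 * Real.pi) := intervalIntegrable_enorm2 hi
  obtain ⟨hi1, hi2⟩ := intervalIntegrable_comps hi
  set S : ℝ → ℝ := fun t => ∫ s in (0 : ℝ)..t, v s with hSdef
  have hv0 : ∀ t, 0 ≤ v t := fun t => enorm2_nonneg _
  have hS0 : S 0 = 0 := by simp [hSdef]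
  have hsub : ∀ p ∈ Icc 0 (2 * Real.pi), ∀ q ∈ Icc 0 (2 * Real.pi),
      uIcc p q ⊆ uIcc 0 (2 * Real.pi) := by
    intro p hp q hq
    rw [uIcc_of_le hpi]
    exact uIcc_subset_Icc hp hq
  have h0mem : (0 : ℝ) ∈ Icc 0 (2 * Real.pi) := ⟨le_rfl, hpi⟩
  have hTmem : 2 * Real.pi ∈ Icc 0 (2 * Real.pi) := ⟨hpi, le_rfl⟩
  have hScont : ContinuousOn S (Icc 0 (2 * Real.pi)) := by
    have := intervalIntegral.continuousOn_primitive_interval' hvi left_mem_uIcc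
    rwa [uIcc_of_le hpi] at this
  have hSmono : ∀ p ∈ Icc 0 (2 * Real.pi), ∀ q ∈ Icc 0 (2 * Real.pi), p ≤ q → S p ≤ S q := by
    intro p hp q hq hpq
    have h1 := intervalIntegral.integral_add_adjacent_intervals
      (hvi.mono_set (hsub 0 h0mem p hp)) (hvi.mono_set (hsub p hp q hq))
    have h2 : 0 ≤ ∫ s in p..q, v s := intervalIntegral.integral_nonneg hpq fun t _ => hv0 t
    simp only [hSdef]
    linarith
  have hSd : ∀ t ∈ Ioo 0 (2 * Real.pi) \ P, HasDerivAt S (v t) t := by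
    intro t ht
    refine intervalIntegral.integral_hasDerivAt_right
      (hvi.mono_set (hsub 0 h0mem t (Ioo_subset_Icc_self ht.1))) ?_ ?_
    · exact ((continuous_enorm2.measurable.comp
        (measurable_deriv γ)).aestronglyMeasurable).stronglyMeasurableAtFilter
    · exact continuous_enorm2.continuousAt.comp (hd t ht).2
  -- the cut point at half the length
  obtain ⟨m, hm, hSm⟩ : ∃ m ∈ Icc 0 (2 * Real.pi), S m = S (2 * Real.pi) / 2 := by
    have hT := hSmono 0 h0mem _ hTmem hpi
    have := intermediate_value_Icc hpi hScont
    exact this ⟨by linarith, by linarith⟩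
  obtain ⟨k, s, hks, hax⟩ := exists_axis ((γ m).1 - (γ 0).1) ((γ m).2 - (γ 0).2)
  set x0 := (γ 0).1
  set y0 := (γ 0).2
  set u : ℝ → ℝ := fun t => -s * ((γ t).1 - x0) + k * ((γ t).2 - y0) with hu
  set W : ℝ → ℝ := fun t => k * ((γ t).1 - x0) + s * ((γ t).2 - y0) with hW
  set u' : ℝ → ℝ := fun t => -s * (deriv γ t).1 + k * (deriv γ t).2 with hu'
  set W' : ℝ → ℝ := fun t => k * (deriv γ t).1 + s * (deriv γ t).2 with hW'
  have hγ1 : ContinuousOn (fun t => (γ t).1) (Icc 0 (2 * Real.pi)) := hγc.fst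
  have hγ2 : ContinuousOn (fun t => (γ t).2) (Icc 0 (2 * Real.pi)) := hγc.snd
  have hd1 : ∀ t ∈ Ioo 0 (2 * Real.pi) \ P, HasDerivAt (fun t => (γ t).1) (deriv γ t).1 t :=
    fun t ht => (hd t ht).1.fst
  have hd2 : ∀ t ∈ Ioo 0 (2 * Real.pi) \ P, HasDerivAt (fun t => (γ t).2) (deriv γ t).2 t :=
    fun t ht => (hd t ht).1.snd
  have huc : ContinuousOn u (Icc 0 (2 * Real.pi)) := by simp only [hu]; fun_prop
  have hWc : ContinuousOn W (Icc 0 (2 * Real.pi)) := by simp only [hW]; fun_prop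
  have hud : ∀ t ∈ Ioo 0 (2 * Real.pi) \ P, HasDerivAt u (u' t) t := fun t ht =>
    (((hd1 t ht).sub_const x0).const_mul (-s)).add (((hd2 t ht).sub_const y0).const_mul k)
  have hWd : ∀ t ∈ Ioo 0 (2 * Real.pi) \ P, HasDerivAt W (W' t) t := fun t ht =>
    (((hd1 t ht).sub_const x0).const_mul k).add (((hd2 t ht).sub_const y0).const_mul s)
  have hu'i : IntervalIntegrable u' volume 0 (2 * Real.pi) :=
    (hi1.const_mul (-s)).add (hi2.const_mul k)
  have hW'i : IntervalIntegrable W' volume 0 (2 * Real.pi) :=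
    (hi1.const_mul k).add (hi2.const_mul s)
  have hvsq : ∀ t, v t ^ 2 = (-W' t) ^ 2 + u' t ^ 2 := by
    intro t
    simp only [hvdef, enorm2_sq, hu', hW']
    linear_combination (-((deriv γ t).1 ^ 2 + (deriv γ t).2 ^ 2)) * hks
  have hu0 : u 0 = 0 := by simp [hu, x0, y0]
  have huT : u (2 * Real.pi) = 0 := by simp [hu, x0, y0, ← hcl]
  have hum : u m = 0 := hax
  have hhalf : ∀ p ∈ Icc 0 (2 * Real.pi), ∀ q ∈ Icc 0 (2 * Real.pi), p ≤ q → u p = 0 →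
      u q = 0 → S q - S p = S (2 * Real.pi) / 2 →
      ∫ t in p..q, 2 * u t * -W' t ≤ S (2 * Real.pi) / 2 * c := by
    intro p hp q hq hpq hup huq hSpq
    have hIcc : Icc p q ⊆ Icc 0 (2 * Real.pi) := Icc_subset_Icc hp.1 hq.2
    have hIoo : Ioo p q \ P ⊆ Ioo 0 (2 * Real.pi) \ P :=
      sdiff_subset_sdiff_left (Ioo_subset_Ioo hp.1 hq.2)
    have hs := hsub p hp q hq
    have := half_area_le (ω := 1 / c) (x' := fun t => -W' t) hpq hP (huc.mono hIcc)
      (hScont.mono hIcc) (fun t ht => hud t (hIoo ht)) (fun t ht => hSd t (hIoo ht)) hv0 hvsq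
      (hW'i.mono_set hs).neg (hu'i.mono_set hs) (hvi.mono_set hs) hup huq
      (fun t ht => ⟨hSmono p hp t (hIcc ht) ht.1, hSmono t (hIcc ht) q hq ht.2⟩)
      (by positivity) (by
        rw [hSpq, one_div, inv_mul_lt_iff₀ hc]
        simp only [hSdef]
        linarith)
    rwa [hSpq, div_div_eq_mul_div, div_one] at this
  have hA := hhalf 0 h0mem m hm hm.1 hu0 hum (by rw [hSm, hS0, sub_zero])
  have hB := hhalf m hm _ hTmem hm.2 hum huT (by rw [hSm]; ring)
  have hii : IntervalIntegrable (fun t => 2 * u t * -W' t) volume 0 (2 * Real.pi) := by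
    refine hW'i.neg.continuousOn_mul ?_
    rw [uIcc_of_le hpi]
    exact continuousOn_const.mul huc
  have hAB := intervalIntegral.integral_add_adjacent_intervals
      (hii.mono_set (hsub 0 h0mem m hm)) (hii.mono_set (hsub m hm _ hTmem))
  -- twice the area element differs from `-2 u dW` by the exact differential of `G`
  set G : ℝ → ℝ := fun t => x0 * (γ t).2 - y0 * (γ t).1 + W t * u t with hG
  set G' : ℝ → ℝ := fun t => x0 * (deriv γ t).2 - y0 * (deriv γ t).1
    + (W' t * u t + W t * u' t) with hG'
  have hG'i : IntervalIntegrable G' volume 0 (2 * Real.pi) := by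
    refine ((hi2.const_mul x0).sub (hi1.const_mul y0)).add
      ((hW'i.mul_continuousOn ?_).add (hu'i.continuousOn_mul ?_))
    · rwa [uIcc_of_le hpi]
    · rwa [uIcc_of_le hpi]
  have hGint : ∫ t in (0 : ℝ)..(2 * Real.pi), G' t = 0 := by
    rw [integral_eq_of_hasDerivAt_off_countable_of_le G G' hpi hP ?_ ?_ hG'i]
    · simp only [hG, hu0, huT, ← hcl]; ring
    · simp only [hG]; fun_prop
    · intro t ht
      exact (((hd2 t ht).const_mul x0).sub ((hd1 t ht).const_mul y0)).add
        ((hWd t ht).mul (hud t ht))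
  have harea : 2 * signedArea γ
      = ∫ t in (0 : ℝ)..(2 * Real.pi), (G' t + 2 * u t * -W' t) := by
    have heq : ∀ t, G' t + 2 * u t * -W' t
        = (γ t).1 * (deriv γ t).2 - (γ t).2 * (deriv γ t).1 := by
      intro t
      simp only [hG', hW', hu', hu, hW]
      linear_combination (((γ t).1 - x0) * (deriv γ t).2 - ((γ t).2 - y0) * (deriv γ t).1) * hks
    simp only [heq, signedArea]
    ring
  rw [harea, intervalIntegral.integral_add hG'i hii, hGint]
  change _ ≤ S (2 * Real.pi) * c
  linarith

/-- On admissible closed curves the exact form `b dx¹` does not contribute to the length. -/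
lemma minkowskiLength_eq {γ : ℝ → ℝ × ℝ} (h : IsAdmissible γ) (b : ℝ) :
    minkowskiLength b γ = ∫ t in (0 : ℝ)..(2 * Real.pi), enorm2 (deriv γ t) := by
  obtain ⟨P, hP, hd, hi⟩ := h.regular
  obtain ⟨hγc, hcl, -⟩ := h
  have hi1 := (intervalIntegrable_comps hi).1
  have h0 : ∫ t in (0 : ℝ)..(2 * Real.pi), (deriv γ t).1 = 0 := by
    rw [integral_eq_of_hasDerivAt_off_countable_of_le (fun t => (γ t).1) _ (by positivity) hP
      hγc.fst (fun t ht => (hd t ht).1.fst) hi1, hcl, sub_self]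
  rw [minkowskiLength, intervalIntegral.integral_add (intervalIntegrable_enorm2 hi)
    (hi1.const_mul b), intervalIntegral.integral_const_mul, h0, mul_zero, add_zero]

lemma deriv_circle (a : ℝ) :
    deriv (fun t : ℝ => (a * Real.cos t, a * Real.sin t))
      = fun t => (-(a * Real.sin t), a * Real.cos t) := by
  ext1 t
  have h := ((Real.hasDerivAt_cos t).const_mul a).prodMk ((Real.hasDerivAt_sin t).const_mul a)
  rw [h.deriv, mul_neg]

lemma signedArea_circle (a : ℝ) :
    signedArea (fun t => (a * Real.cos t, a * Real.sin t)) = Real.pi * a ^ 2 := by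
  have : ∀ t : ℝ, a * Real.cos t * (a * Real.cos t) - a * Real.sin t * -(a * Real.sin t)
      = a ^ 2 := fun t => by linear_combination a ^ 2 * Real.sin_sq_add_cos_sq t
  simp only [signedArea, deriv_circle, this, intervalIntegral.integral_const, smul_eq_mul]
  ring

lemma minkowskiLength_circle (a b : ℝ) (ha : 0 < a) :
    minkowskiLength b (fun t => (a * Real.cos t, a * Real.sin t)) = 2 * Real.pi * a := by
  have h1 : ∀ t : ℝ, enorm2 (-(a * Real.sin t), a * Real.cos t) = a := fun t => by
    have : (-(a * Real.sin t)) ^ 2 + (a * Real.cos t) ^ 2 = a ^ 2 := by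
      linear_combination a ^ 2 * Real.sin_sq_add_cos_sq t
    rw [enorm2, this, Real.sqrt_sq ha.le]
  simp only [minkowskiLength, deriv_circle, h1]
  rw [intervalIntegral.integral_add (by simp) (Continuous.intervalIntegrable (by fun_prop) _ _)]
  simp


theorem circle_solves_minkowski_isoperimetric_problem
    (a b : ℝ) (ha : 0 < a) (hb0 : 0 < b) (hb1 : b < 1) :
    ∃ ε : ℝ, 0 < ε ∧
      signedArea (fun t => (a * Real.cos t, a * Real.sin t)) = Real.pi * a ^ 2 ∧
      minkowskiLength b (fun t => (a * Real.cos t, a * Real.sin t)) = 2 * Real.pi * a ∧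
      ∀ γ : ℝ → ℝ × ℝ, IsAdmissible γ →
        (∀ t ∈ Set.Icc (0 : ℝ) (2 * Real.pi),
          enorm2 (γ t - (a * Real.cos t, a * Real.sin t)) < ε) →
        minkowskiLength b γ
          = minkowskiLength b (fun t => (a * Real.cos t, a * Real.sin t)) →
        signedArea γ ≤ signedArea (fun t => (a * Real.cos t, a * Real.sin t)) := by
  refine ⟨1, one_pos, signedArea_circle a, minkowskiLength_circle a b ha, ?_⟩
  intro γ hγ _ hlen
  rw [minkowskiLength_circle a b ha, minkowskiLength_eq hγ] at hlen
  rw [signedArea_circle]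
  have hpi := Real.pi_pos
  have key : ∀ c, a < c → signedArea γ / (Real.pi * a) ≤ c := by
    intro c hac
    have h := two_mul_signedArea_le hγ (ha.trans hac)
      (by rw [hlen]; exact mul_lt_mul_of_pos_left hac (by positivity))
    rw [hlen] at h
    rw [div_le_iff₀ (by positivity)]
    linarith
  have h := le_of_forall_gt_imp_ge_of_dense key
  rw [div_le_iff₀ (by positivity)] at h
  linarith
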